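/- Let n ∈ ℕ, p⃗, q⃗ ∈ (0,∞)^n and α⃗ ∈ ℝⁿ. Then H(ℝⁿ) is dense in Ė^{α⃗,p⃗}_{q⃗}(ℝⁿ): for every f ∈ Ė^{α⃗,p⃗}_{q⃗}(ℝⁿ) and every ε > 0 there exists g ∈ H(ℝⁿ) with ‖f - g‖_{Ė^{α⃗,p⃗}_{q⃗}(ℝⁿ)} < ε. -/

import Mathlib

open MeasureTheory ENNReal Filter

noncomputable section

/-- The dyadic annulus `R_k = (-2^k, 2^k) \ (-2^(k-1), 2^(k-1))` in `ℝ`. -/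
def herzRing (k : ℤ) : Set ℝ :=
  Set.Ioo (-(2 : ℝ) ^ k) ((2 : ℝ) ^ k) \ Set.Ioo (-(2 : ℝ) ^ (k - 1)) ((2 : ℝ) ^ (k - 1))

/-- The `L^q` "norm" (valued in `ℝ≥0∞`) of an `ℝ≥0∞`-valued function on a set `s ⊆ ℝ`,
with the usual modification when `q = ∞`. -/
def lqNormOn (q : ℝ≥0∞) (s : Set ℝ) (g : ℝ → ℝ≥0∞) : ℝ≥0∞ :=
  if q = ∞ then essSup (s.indicator g) volume
  else (∫⁻ x in s, g x ^ q.toReal) ^ (1 / q.toReal)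

/-- The `l^p` norm over `ℤ` of an `ℝ≥0∞`-valued sequence, with the usual modification
when `p = ∞`. -/
def lpZNorm (p : ℝ≥0∞) (a : ℤ → ℝ≥0∞) : ℝ≥0∞ :=
  if p = ∞ then ⨆ k, a k
  else (∑' k : ℤ, a k ^ p.toReal) ^ (1 / p.toReal)

/-- The one-dimensional Herz norm `K^{α,p}_q` of an `ℝ≥0∞`-valued function on `ℝ`. -/
def herzNorm1 (α : ℝ) (p q : ℝ≥0∞) (g : ℝ → ℝ≥0∞) : ℝ≥0∞ :=
  lpZNorm p fun k => ENNReal.ofReal ((2 : ℝ) ^ ((k : ℝ) * α)) * lqNormOn q (herzRing k) g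

/-- The mixed-norm Herz norm on `ℝⁿ` of an `ℝ≥0∞`-valued function: the Herz norm
`K^{α_1,p_1}_{q_1}` is applied in the first variable, then `K^{α_2,p_2}_{q_2}` in the
second variable, …, and finally `K^{α_n,p_n}_{q_n}` in the last variable. -/
def mixedHerzNormE : (n : ℕ) → (Fin n → ℝ) → (Fin n → ℝ≥0∞) → (Fin n → ℝ≥0∞) →
    ((Fin n → ℝ) → ℝ≥0∞) → ℝ≥0∞
  | 0, _, _, _, f => f fun i => i.elim0
  | n + 1, α, p, q, f =>
    herzNorm1 (α (Fin.last n)) (p (Fin.last n)) (q (Fin.last n)) fun xlast =>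
      mixedHerzNormE n (Fin.init α) (Fin.init p) (Fin.init q) fun y => f (Fin.snoc y xlast)

/-- The mixed-norm Herz norm `‖f‖_{Ė^{α,p}_q(ℝⁿ)}` of a complex-valued function on `ℝⁿ`. -/
def herzNormC (n : ℕ) (α : Fin n → ℝ) (p q : Fin n → ℝ≥0∞) (f : (Fin n → ℝ) → ℂ) : ℝ≥0∞ :=
  mixedHerzNormE n α p q fun x => (‖f x‖₊ : ℝ≥0∞)

/-- `I_m = (-2^m, -2^{-m}] ∪ [2^{-m}, 2^m)`. -/
def herzI (m : ℕ) : Set ℝ :=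
  Set.Ioc (-(2 : ℝ) ^ (m : ℤ)) (-(2 : ℝ) ^ (-(m : ℤ))) ∪
    Set.Ico ((2 : ℝ) ^ (-(m : ℤ))) ((2 : ℝ) ^ (m : ℤ))

/-- `A_m = I_m^n ⊆ ℝⁿ`. -/
def herzA (n m : ℕ) : Set (Fin n → ℝ) := Set.univ.pi fun _ => herzI m

/-- The class `H(ℝⁿ)` of simple functions built from finitely many pairwise disjoint
parallelepipeds contained in some `A_m`. -/
def IsHSimple (n : ℕ) (f : (Fin n → ℝ) → ℂ) : Prop :=
  ∃ (m N : ℕ) (a : Fin N → ℂ) (E : Fin N → Fin n → Set ℝ),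
    (∀ k i, MeasurableSet (E k i)) ∧
    (∀ k, Set.univ.pi (E k) ⊆ herzA n m) ∧
    (Pairwise fun k l => Disjoint (Set.univ.pi (E k)) (Set.univ.pi (E l))) ∧
    f = fun x => ∑ k, (Set.univ.pi (E k)).indicator (fun _ => a k) x

/-- The Euclidean ball `B(x,r)` in `ℝⁿ`. -/
def eucBall (n : ℕ) (x : Fin n → ℝ) (r : ℝ) : Set (Fin n → ℝ) :=
  {y | ∑ i, (y i - x i) ^ 2 < r ^ 2}

/-- The (uncentered) maximal operator in the `k`-th variable. -/
def maxVar (n : ℕ) (k : Fin n) (g : (Fin n → ℝ) → ℝ≥0∞) : (Fin n → ℝ) → ℝ≥0∞ :=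
  fun x => ⨆ (a : ℝ) (b : ℝ) (_ : x k ∈ Set.Ioo a b),
    (volume (Set.Ioo a b))⁻¹ * ∫⁻ y in Set.Ioo a b, g (Function.update x k y)

/-- The centered Hardy–Littlewood maximal operator on `ℝⁿ`. -/
def centeredMax (n : ℕ) (g : (Fin n → ℝ) → ℝ≥0∞) : (Fin n → ℝ) → ℝ≥0∞ :=
  fun x => ⨆ (r : ℝ) (_ : 0 < r),
    (volume (eucBall n x r))⁻¹ * ∫⁻ y in eucBall n x r, g y

/-- The composition `M_n ∘ ⋯ ∘ M_1` of the maximal operators in each variable. -/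
def iteratedMax (n : ℕ) (g : (Fin n → ℝ) → ℝ≥0∞) : (Fin n → ℝ) → ℝ≥0∞ :=
  (List.ofFn fun k : Fin n => maxVar n k).foldl (fun h F => F h) g

/-- The iterated maximal operator `ℳ_t(f) = [M_n ⋯ M_1(|f|^t)]^{1/t}`. -/
def iterMaxPow (n : ℕ) (t : ℝ) (f : (Fin n → ℝ) → ℂ) : (Fin n → ℝ) → ℝ≥0∞ :=
  fun x => iteratedMax n (fun y => (‖f y‖₊ : ℝ≥0∞) ^ t) x ^ (1 / t)

/-- The `l^r`-Herz type mixed norm of a sequence of functions on `ℝⁿ`. -/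
def herzSeqNorm (n : ℕ) (r : ℝ≥0∞) (α : Fin n → ℝ) (p q : Fin n → ℝ≥0∞)
    (F : ℤ → (Fin n → ℝ) → ℂ) : ℝ≥0∞ :=
  mixedHerzNormE n α p q fun x => lpZNorm r fun j => (‖F j x‖₊ : ℝ≥0∞)

/-- `N` is a ball quasi-Banach function norm on (nonnegative extended-real-valued)
measurable functions on `ℝⁿ`. -/
def IsBQBFNorm (n : ℕ) (N : ((Fin n → ℝ) → ℝ≥0∞) → ℝ≥0∞) : Prop :=
  (∀ f : (Fin n → ℝ) → ℝ≥0∞, Measurable f → N f = 0 → f =ᵐ[volume] 0) ∧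
  (∀ f g : (Fin n → ℝ) → ℝ≥0∞, Measurable f → Measurable g →
    (∀ᵐ x ∂volume, g x ≤ f x) → N g ≤ N f) ∧
  (∀ (fm : ℕ → (Fin n → ℝ) → ℝ≥0∞) (f : (Fin n → ℝ) → ℝ≥0∞),
    (∀ m, Measurable (fm m)) → Measurable f →
    (∀ᵐ x ∂volume, Monotone (fun m => fm m x) ∧
      Tendsto (fun m => fm m x) atTop (nhds (f x))) →
    Monotone (fun m => N (fm m)) ∧ Tendsto (fun m => N (fm m)) atTop (nhds (N f))) ∧
  (∀ (x : Fin n → ℝ) (r : ℝ), 0 < r →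
    N ((eucBall n x r).indicator fun _ => (1 : ℝ≥0∞)) ≠ ∞)

/-- `N` is a ball Banach function norm: a ball quasi-Banach function norm that moreover
satisfies the triangle inequality and locally dominates the `L¹` norm. -/
def IsBallBanachNorm (n : ℕ) (N : ((Fin n → ℝ) → ℝ≥0∞) → ℝ≥0∞) : Prop :=
  IsBQBFNorm n N ∧
  (∀ f g : (Fin n → ℝ) → ℝ≥0∞, Measurable f → Measurable g → N (f + g) ≤ N f + N g) ∧
  (∀ (x : Fin n → ℝ) (r : ℝ), 0 < r → ∃ C : ℝ≥0∞, 0 < C ∧ C ≠ ∞ ∧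
    ∀ f : (Fin n → ℝ) → ℝ≥0∞, Measurable f → (∫⁻ y in eucBall n x r, f y) ≤ C * N f)

/-- The associate (Köthe dual) norm of a function norm `N`. -/
def assocNormOf (n : ℕ) (N : ((Fin n → ℝ) → ℝ≥0∞) → ℝ≥0∞)
    (f : (Fin n → ℝ) → ℝ≥0∞) : ℝ≥0∞ :=
  ⨆ (g : (Fin n → ℝ) → ℝ≥0∞) (_ : Measurable g) (_ : N g = 1), ∫⁻ x, f x * g x

/-- The `θ`-convexification of a function norm: `‖f‖_{X^θ} = ‖|f|^θ‖_X^{1/θ}`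
(here stated with `θ` in place of `1/p`, so `X^{1/p}` is `convexPow n (1/p) N`). -/
def convexPow (n : ℕ) (θ : ℝ) (N : ((Fin n → ℝ) → ℝ≥0∞) → ℝ≥0∞)
    (f : (Fin n → ℝ) → ℝ≥0∞) : ℝ≥0∞ :=
  N (fun x => f x ^ θ) ^ (1 / θ)

/-- The associate space norm of the mixed-norm Herz space, for complex-valued functions. -/
def herzAssocNormC (n : ℕ) (α : Fin n → ℝ) (p q : Fin n → ℝ≥0∞)
    (f : (Fin n → ℝ) → ℂ) : ℝ≥0∞ :=
  ⨆ (g : (Fin n → ℝ) → ℂ) (_ : Measurable g) (_ : herzNormC n α p q g = 1),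
    ∫⁻ x, (‖f x * g x‖₊ : ℝ≥0∞)

/-! ### Auxiliary material -/

def hz (α p q : ℝ) (g : ℝ → ℝ≥0∞) : ℝ≥0∞ :=
  (∑' k : ℤ, (ENNReal.ofReal ((2 : ℝ) ^ ((k : ℝ) * α)) *
    (∫⁻ x in herzRing k, g x ^ q) ^ (1 / q)) ^ p) ^ (1 / p)

def MN : (n : ℕ) → (Fin n → ℝ) → (Fin n → ℝ) → (Fin n → ℝ) →
    ((Fin n → ℝ) → ℝ≥0∞) → ℝ≥0∞
  | 0, _, _, _, f => f fun i => i.elim0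
  | n + 1, α, p, q, f =>
    hz (α (Fin.last n)) (p (Fin.last n)) (q (Fin.last n)) fun xlast =>
      MN n (Fin.init α) (Fin.init p) (Fin.init q) fun y => f (Fin.snoc y xlast)

lemma herzNorm1_eq_hz (α p q : ℝ) (hp : 0 < p) (hq : 0 < q) (g : ℝ → ℝ≥0∞) :
    herzNorm1 α (ENNReal.ofReal p) (ENNReal.ofReal q) g = hz α p q g := by
  unfold herzNorm1 lpZNorm lqNormOn hz
  simp [ENNReal.toReal_ofReal hp.le, ENNReal.toReal_ofReal hq.le]

lemma mixed_eq_MN (n : ℕ) (α p q : Fin n → ℝ) (hp : ∀ i, 0 < p i) (hq : ∀ i, 0 < q i)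
    (F : (Fin n → ℝ) → ℝ≥0∞) :
    mixedHerzNormE n α (fun i => ENNReal.ofReal (p i)) (fun i => ENNReal.ofReal (q i)) F
      = MN n α p q F := by
  induction n with
  | zero => rfl
  | succ n ih =>
    simp only [mixedHerzNormE, MN]
    rw [herzNorm1_eq_hz _ _ _ (hp _) (hq _)]
    congr 1
    funext x
    exact ih (Fin.init α) (Fin.init p) (Fin.init q) (fun i => hp _) (fun i => hq _) _

lemma hz_mono {α p q : ℝ} (hp : 0 < p) (hq : 0 < q) {g h : ℝ → ℝ≥0∞} (hgh : ∀ x, g x ≤ h x) :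
    hz α p q g ≤ hz α p q h := by
  unfold hz
  refine ENNReal.rpow_le_rpow (ENNReal.tsum_le_tsum fun k => ?_) (by positivity)
  refine ENNReal.rpow_le_rpow ?_ hp.le
  gcongr
  exact hgh _

lemma MN_mono {n : ℕ} {α p q : Fin n → ℝ} (hp : ∀ i, 0 < p i) (hq : ∀ i, 0 < q i)
    {F G : (Fin n → ℝ) → ℝ≥0∞} (h : ∀ x, F x ≤ G x) : MN n α p q F ≤ MN n α p q G := by
  induction n with
  | zero => exact h _
  | succ n ih =>
    exact hz_mono (hp _) (hq _) fun x => ih (fun i => hp _) (fun i => hq _) fun y => h _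

lemma measurableSet_herzRing (k : ℤ) : MeasurableSet (herzRing k) :=
  measurableSet_Ioo.diff measurableSet_Ioo

lemma measurableSet_herzI (m : ℕ) : MeasurableSet (herzI m) :=
  measurableSet_Ioc.union measurableSet_Ico

lemma measurable_hz {Z : Type} [MeasurableSpace Z] (α p q : ℝ) {F : Z → ℝ → ℝ≥0∞}
    (hF : Measurable (Function.uncurry F)) : Measurable fun z => hz α p q (F z) := by
  unfold hz
  refine Measurable.pow_const (Measurable.tsum fun k => ?_) _
  refine Measurable.pow_const (Measurable.const_mul (Measurable.pow_const ?_ _) _) _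
  exact Measurable.lintegral_prod_right' (f := fun z : Z × ℝ => F z.1 z.2 ^ q)
    (hF.pow_const q)

lemma measurable_snoc' {Z : Type} [MeasurableSpace Z] {n : ℕ} {u : Z → (Fin n → ℝ)} {v : Z → ℝ}
    (hu : Measurable u) (hv : Measurable v) :
    Measurable fun z => (Fin.snoc (u z) (v z) : Fin (n+1) → ℝ) := by
  refine measurable_pi_iff.2 fun i => ?_
  refine Fin.lastCases ?_ (fun j => ?_) i
  · simpa using hv
  · simpa using measurable_pi_iff.1 hu j

lemma measurable_MN {n : ℕ} (α p q : Fin n → ℝ) {Z : Type} [MeasurableSpace Z]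
    {F : Z → (Fin n → ℝ) → ℝ≥0∞}
    (hF : Measurable (Function.uncurry F)) : Measurable fun z => MN n α p q (F z) := by
  induction n generalizing Z with
  | zero => exact hF.comp (measurable_id.prodMk measurable_const)
  | succ n ih =>
    refine measurable_hz _ _ _ ?_
    refine ih (Fin.init α) (Fin.init p) (Fin.init q) (Z := Z × ℝ)
      (F := fun z y => F z.1 (Fin.snoc y z.2)) ?_
    exact hF.comp ((measurable_fst.comp measurable_fst).prodMk
      (measurable_snoc' measurable_snd (measurable_snd.comp measurable_fst)))

lemma measurable_MN_slice {n : ℕ} (α p q : Fin n → ℝ) {F : (Fin (n+1) → ℝ) → ℝ≥0∞}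
    (hF : Measurable F) : Measurable fun x : ℝ => MN n α p q fun y => F (Fin.snoc y x) := by
  refine measurable_MN α p q (F := fun x y => F (Fin.snoc y x)) ?_
  exact hF.comp (measurable_snoc' measurable_snd measurable_fst)

lemma hz_const_mul {α p q : ℝ} (hp : 0 < p) (hq : 0 < q) {c : ℝ≥0∞} (hc : c ≠ ∞)
    (g : ℝ → ℝ≥0∞) : hz α p q (fun x => c * g x) = c * hz α p q g := by
  unfold hz
  have h1 : ∀ k : ℤ, (∫⁻ x in herzRing k, (c * g x) ^ q) ^ (1 / q)
      = c * (∫⁻ x in herzRing k, g x ^ q) ^ (1 / q) := by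
    intro k
    simp_rw [ENNReal.mul_rpow_of_nonneg _ _ hq.le]
    rw [lintegral_const_mul' _ _ (ENNReal.rpow_ne_top_of_nonneg hq.le hc),
      ENNReal.mul_rpow_of_nonneg _ _ (by positivity), ← ENNReal.rpow_mul,
      mul_one_div_cancel hq.ne', ENNReal.rpow_one]
  simp_rw [h1, mul_left_comm _ c, ENNReal.mul_rpow_of_nonneg c _ hp.le]
  rw [ENNReal.tsum_mul_left, ENNReal.mul_rpow_of_nonneg _ _ (by positivity), ← ENNReal.rpow_mul,
      mul_one_div_cancel hp.ne', ENNReal.rpow_one]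

lemma MN_const_mul {n : ℕ} {α p q : Fin n → ℝ} (hp : ∀ i, 0 < p i) (hq : ∀ i, 0 < q i)
    {c : ℝ≥0∞} (hc : c ≠ ∞) (F : (Fin n → ℝ) → ℝ≥0∞) :
    MN n α p q (fun x => c * F x) = c * MN n α p q F := by
  induction n with
  | zero => rfl
  | succ n ih =>
    simp only [MN]
    rw [← hz_const_mul (hp _) (hq _) hc]
    congr 1
    funext x
    exact ih (fun i => hp _) (fun i => hq _) _

lemma MN_zero {n : ℕ} {α p q : Fin n → ℝ} (hp : ∀ i, 0 < p i) (hq : ∀ i, 0 < q i) :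
    MN n α p q (fun _ => 0) = 0 := by
  simpa using MN_const_mul (α := α) hp hq (c := 0) (by simp) (fun _ => 0)

lemma add_rpow_le' {r : ℝ} (hr : 0 < r) (a b : ℝ≥0∞) :
    (a + b) ^ r ≤ 2 ^ r * (a ^ r + b ^ r) := by
  rw [mul_add]
  rcases le_total a b with h | h
  · refine le_trans ?_ le_add_self
    rw [← ENNReal.mul_rpow_of_nonneg _ _ hr.le, two_mul]
    gcongr
  · refine le_trans ?_ le_self_add
    rw [← ENNReal.mul_rpow_of_nonneg _ _ hr.le, two_mul]
    gcongr

lemma hz_add {α p q : ℝ} (hp : 0 < p) (hq : 0 < q) :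
    ∃ C : ℝ≥0∞, C ≠ ∞ ∧ ∀ g h : ℝ → ℝ≥0∞, Measurable g → Measurable h →
      hz α p q (fun x => g x + h x) ≤ C * (hz α p q g + hz α p q h) := by
  have hq' : 0 < 1 / q := by positivity
  have hp' : 0 < 1 / p := by positivity
  have h2 : ∀ r : ℝ, 0 < r → (2 : ℝ≥0∞) ^ r ≠ ∞ := fun r hr =>
    ENNReal.rpow_ne_top_of_nonneg hr.le (by simp)
  -- general step
  have key : ∀ r : ℝ, 0 < r → ∀ a b c : ℝ≥0∞, c ≤ 2 ^ r * (a + b) →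
      c ^ (1 / r) ≤ (2 * 2 ^ (1 / r)) * (a ^ (1 / r) + b ^ (1 / r)) := by
    intro r hr a b c h
    have hr' : 0 < 1 / r := by positivity
    calc c ^ (1 / r) ≤ (2 ^ r * (a + b)) ^ (1 / r) := by gcongr
      _ = 2 * (a + b) ^ (1 / r) := by
        rw [ENNReal.mul_rpow_of_nonneg _ _ hr'.le, ← ENNReal.rpow_mul,
          mul_one_div_cancel hr.ne', ENNReal.rpow_one]
      _ ≤ 2 * (2 ^ (1 / r) * (a ^ (1 / r) + b ^ (1 / r))) := by
        gcongr; exact add_rpow_le' hr' a b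
      _ = _ := by rw [mul_assoc]
  set D : ℝ≥0∞ := 2 * 2 ^ (1 / q) with hD
  have hDt : D ≠ ∞ := ENNReal.mul_ne_top (by simp) (h2 _ hq')
  refine ⟨D * (2 * 2 ^ (1 / p)), ENNReal.mul_ne_top hDt
    (ENNReal.mul_ne_top (by simp) (h2 _ hp')), fun g h hg hh => ?_⟩
  have e1 : ∀ k : ℤ, (∫⁻ x in herzRing k, (g x + h x) ^ q) ^ (1 / q) ≤
      D * ((∫⁻ x in herzRing k, g x ^ q) ^ (1 / q) + (∫⁻ x in herzRing k, h x ^ q) ^ (1 / q)) := by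
    intro k
    apply key q hq
    rw [← lintegral_add_left (hg.pow_const q), ← lintegral_const_mul' _ _ (h2 q hq)]
    exact lintegral_mono fun x => add_rpow_le' hq _ _
  unfold hz
  set A : ℤ → ℝ≥0∞ := fun k => ENNReal.ofReal ((2 : ℝ) ^ ((k : ℝ) * α)) *
    (∫⁻ x in herzRing k, g x ^ q) ^ (1 / q) with hA
  set B : ℤ → ℝ≥0∞ := fun k => ENNReal.ofReal ((2 : ℝ) ^ ((k : ℝ) * α)) *
    (∫⁻ x in herzRing k, h x ^ q) ^ (1 / q) with hB
  have e2 : ∀ k : ℤ, ENNReal.ofReal ((2 : ℝ) ^ ((k : ℝ) * α)) *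
    (∫⁻ x in herzRing k, (g x + h x) ^ q) ^ (1 / q) ≤ D * (A k + B k) := by
    intro k
    calc _ ≤ ENNReal.ofReal ((2 : ℝ) ^ ((k : ℝ) * α)) * (D * ((∫⁻ x in herzRing k, g x ^ q) ^ (1 / q)
          + (∫⁻ x in herzRing k, h x ^ q) ^ (1 / q))) := by gcongr; exact e1 k
      _ = _ := by simp only [hA, hB]; ring
  calc _ ≤ (∑' k : ℤ, (D * (A k + B k)) ^ p) ^ (1 / p) := by
        exact ENNReal.rpow_le_rpow (ENNReal.tsum_le_tsum fun k =>
          ENNReal.rpow_le_rpow (e2 k) hp.le) hp'.le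
    _ = D * (∑' k : ℤ, (A k + B k) ^ p) ^ (1 / p) := by
        simp_rw [ENNReal.mul_rpow_of_nonneg _ _ hp.le]
        rw [ENNReal.tsum_mul_left, ENNReal.mul_rpow_of_nonneg _ _ (by positivity),
          ← ENNReal.rpow_mul, mul_one_div_cancel hp.ne', ENNReal.rpow_one]
    _ ≤ D * ((2 * 2 ^ (1 / p)) * ((∑' k, A k ^ p) ^ (1 / p) + (∑' k, B k ^ p) ^ (1 / p))) := by
        gcongr
        apply key p hp
        rw [← ENNReal.tsum_add, ← ENNReal.tsum_mul_left]
        exact ENNReal.tsum_le_tsum fun k => add_rpow_le' hp _ _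
    _ = _ := (mul_assoc _ _ _).symm

lemma MN_add {n : ℕ} {α p q : Fin n → ℝ} (hp : ∀ i, 0 < p i) (hq : ∀ i, 0 < q i) :
    ∃ C : ℝ≥0∞, C ≠ ∞ ∧ ∀ F G : (Fin n → ℝ) → ℝ≥0∞, Measurable F → Measurable G →
      MN n α p q (fun x => F x + G x) ≤ C * (MN n α p q F + MN n α p q G) := by
  induction n with
  | zero => exact ⟨1, by simp, fun F G _ _ => by simp [MN]⟩
  | succ n ih =>
    obtain ⟨C, hC, h⟩ := ih (α := Fin.init α) (p := Fin.init p) (q := Fin.init q)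
      (fun i => hp _) (fun i => hq _)
    obtain ⟨D, hD, h'⟩ := hz_add (α := α (Fin.last n)) (hp (Fin.last n)) (hq (Fin.last n))
    refine ⟨C * D, ENNReal.mul_ne_top hC hD, fun F G hF hG => ?_⟩
    simp only [MN]
    refine (hz_mono (hp _) (hq _) fun x => h _ _
      (hF.comp (measurable_snoc' measurable_id measurable_const))
      (hG.comp (measurable_snoc' measurable_id measurable_const))).trans ?_
    rw [hz_const_mul (hp _) (hq _) hC, mul_assoc]
    gcongr
    exact h' _ _ (measurable_MN_slice _ _ _ hF) (measurable_MN_slice _ _ _ hG)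

lemma ae_of_ring {P : ℝ → Prop} {k : ℤ} (h : ∀ᵐ x : ℝ, P x) :
    ∀ᵐ x ∂(volume.restrict (herzRing k)), P x := ae_restrict_of_ae h

lemma hz_dct {α p q : ℝ} (hp : 0 < p) (hq : 0 < q) {F : ℕ → ℝ → ℝ≥0∞} {G : ℝ → ℝ≥0∞}
    (hF : ∀ j, Measurable (F j)) (hG : Measurable G) (hle : ∀ j x, F j x ≤ G x)
    (hfin : hz α p q G ≠ ∞)
    (hlim : ∀ᵐ x : ℝ, G x ≠ ∞ → Tendsto (fun j => F j x) atTop (nhds 0)) :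
    Tendsto (fun j => hz α p q (F j)) atTop (nhds 0) := by
  have hq' : 0 < 1 / q := by positivity
  have hp' : 0 < 1 / p := by positivity
  unfold hz at hfin ⊢
  have hsum : (∑' k : ℤ, (ENNReal.ofReal ((2 : ℝ) ^ ((k : ℝ) * α)) *
    (∫⁻ x in herzRing k, G x ^ q) ^ (1 / q)) ^ p) ≠ ∞ := by
    intro h
    rw [h, ENNReal.top_rpow_of_pos hp'] at hfin
    exact hfin rfl
  have hint : ∀ k : ℤ, ∫⁻ x in herzRing k, G x ^ q ≠ ∞ := by
    intro k h
    have := ENNReal.ne_top_of_tsum_ne_top hsum k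
    rw [h, ENNReal.top_rpow_of_pos hq', ENNReal.mul_top, ENNReal.top_rpow_of_pos hp] at this
    · exact this rfl
    · simp only [ne_eq, ENNReal.ofReal_eq_zero, not_le]; positivity
  have hk : ∀ k : ℤ, Tendsto (fun j => ∫⁻ x in herzRing k, F j x ^ q) atTop (nhds 0) := by
    intro k
    have := tendsto_lintegral_of_dominated_convergence (μ := volume.restrict (herzRing k))
      (F := fun j x => F j x ^ q) (f := fun _ => 0) (fun x => G x ^ q)
      (fun j => (hF j).pow_const q)
      (fun j => Eventually.of_forall fun x => ENNReal.rpow_le_rpow (hle j x) hq.le)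
      (hint k) ?_
    · simpa using this
    · filter_upwards [ae_of_ring hlim, ae_lt_top (hG.pow_const q) (hint k)] with x hx hx2
      have hx3 : G x ≠ ∞ := by
        intro h
        rw [h, ENNReal.top_rpow_of_pos hq] at hx2
        exact lt_irrefl _ hx2
      have := (hx hx3).ennrpow_const q
      rwa [ENNReal.zero_rpow_of_pos hq] at this
  have hk2 : ∀ k : ℤ, Tendsto (fun j => (ENNReal.ofReal ((2 : ℝ) ^ ((k : ℝ) * α)) *
    (∫⁻ x in herzRing k, F j x ^ q) ^ (1 / q)) ^ p) atTop (nhds 0) := by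
    intro k
    have h1 := (hk k).ennrpow_const (1 / q)
    rw [ENNReal.zero_rpow_of_pos hq'] at h1
    have h2 := ENNReal.Tendsto.const_mul (a := ENNReal.ofReal ((2 : ℝ) ^ ((k : ℝ) * α))) h1
      (Or.inr ENNReal.ofReal_ne_top)
    have h3 := h2.ennrpow_const p
    rwa [mul_zero, ENNReal.zero_rpow_of_pos hp] at h3
  have hfinal := tendsto_lintegral_of_dominated_convergence (μ := (Measure.count : Measure ℤ))
      (F := fun j k => (ENNReal.ofReal ((2 : ℝ) ^ ((k : ℝ) * α)) *
        (∫⁻ x in herzRing k, F j x ^ q) ^ (1 / q)) ^ p) (f := fun _ => 0)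
      (fun k => (ENNReal.ofReal ((2 : ℝ) ^ ((k : ℝ) * α)) *
        (∫⁻ x in herzRing k, G x ^ q) ^ (1 / q)) ^ p)
      (fun j => Measurable.of_discrete)
      (fun j => Eventually.of_forall fun k => by
        dsimp only
        gcongr with x
        exact hle j x)
      (by rwa [lintegral_count]) (Eventually.of_forall hk2)
  simp only [lintegral_count, tsum_zero] at hfinal
  have := hfinal.ennrpow_const (1 / p)
  rwa [ENNReal.zero_rpow_of_pos hp'] at this

lemma MN_dct {n : ℕ} {α p q : Fin n → ℝ} (hp : ∀ i, 0 < p i) (hq : ∀ i, 0 < q i)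
    {F : ℕ → (Fin n → ℝ) → ℝ≥0∞} {G : (Fin n → ℝ) → ℝ≥0∞}
    (hF : ∀ j, Measurable (F j)) (hG : Measurable G) (hle : ∀ j x, F j x ≤ G x)
    (hfin : MN n α p q G ≠ ∞)
    (hlim : ∀ x, (∀ i, x i ≠ 0) → Tendsto (fun j => F j x) atTop (nhds 0)) :
    Tendsto (fun j => MN n α p q (F j)) atTop (nhds 0) := by
  induction n with
  | zero => exact hlim _ (fun i => i.elim0)
  | succ n ih =>
    refine hz_dct (hp _) (hq _) (fun j => measurable_MN_slice _ _ _ (hF j))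
      (measurable_MN_slice _ _ _ hG) (fun j x => MN_mono (fun i => hp _) (fun i => hq _)
        fun y => hle _ _) hfin ?_
    have h0 : ∀ᵐ x : ℝ, x ≠ 0 := by
      simp [ae_iff]
    filter_upwards [h0] with x hx hGx
    refine ih (fun i => hp _) (fun i => hq _)
      (fun j => (hF j).comp (measurable_snoc' measurable_id measurable_const))
      (hG.comp (measurable_snoc' measurable_id measurable_const)) (fun j y => hle _ _) hGx
      fun y hy => hlim _ fun i => ?_
    refine Fin.lastCases ?_ (fun j => ?_) i
    · simpa using hx
    · simpa using hy j

lemma herzI_abs {m : ℕ} {x : ℝ} (hx : x ∈ herzI m) :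
    (2 : ℝ) ^ (-(m : ℤ)) ≤ |x| ∧ |x| ≤ (2 : ℝ) ^ (m : ℤ) := by
  have h0 : (0 : ℝ) < (2 : ℝ) ^ (-(m : ℤ)) := by positivity
  rcases hx with ⟨h1, h2⟩ | ⟨h1, h2⟩
  · rw [abs_of_neg (by linarith)]; constructor <;> linarith
  · rw [abs_of_pos (by linarith)]; constructor <;> linarith

lemma herzI_lt {m : ℕ} {x : ℝ} (hx : x ∈ herzI m) : |x| < (2 : ℝ) ^ (m : ℤ) := by
  have h0 : (0 : ℝ) < (2 : ℝ) ^ (-(m : ℤ)) := by positivity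
  rcases hx with ⟨h1, h2⟩ | ⟨h1, h2⟩
  · rw [abs_of_neg (by linarith)]; linarith
  · rw [abs_of_pos (by linarith)]; linarith

lemma herzI_of_abs {m : ℕ} {x : ℝ} (h1 : (2 : ℝ) ^ (-(m : ℤ)) ≤ |x|)
    (h2 : |x| < (2 : ℝ) ^ (m : ℤ)) : x ∈ herzI m := by
  rcases le_total 0 x with h | h
  · rw [abs_of_nonneg h] at *; exact Or.inr ⟨h1, h2⟩
  · rw [abs_of_nonpos h] at *; exact Or.inl ⟨by linarith, by linarith⟩

lemma ring_inter {m : ℕ} {k : ℤ} {x : ℝ} (hx : x ∈ herzI m) (hk : x ∈ herzRing k) :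
    k ∈ Finset.Icc (-(m : ℤ)) m := by
  obtain ⟨h1, h2⟩ := hk
  have h3 : |x| < (2 : ℝ) ^ k := abs_lt.2 h1
  have h4 : (2 : ℝ) ^ (k - 1) ≤ |x| := by
    by_contra h
    exact h2 (abs_lt.1 (not_le.1 h))
  have h5 := (zpow_lt_zpow_iff_right₀ (one_lt_two (α := ℝ))).1 ((herzI_abs hx).1.trans_lt h3)
  have h6 := (zpow_lt_zpow_iff_right₀ (one_lt_two (α := ℝ))).1 (h4.trans_lt (herzI_lt hx))
  rw [Finset.mem_Icc]; omega

lemma hz_indicator {α p q : ℝ} (hp : 0 < p) (hq : 0 < q) (m : ℕ) :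
    hz α p q ((herzI m).indicator fun _ => 1) ≠ ∞ := by
  have hq' : 0 < 1 / q := by positivity
  have hp' : 0 < 1 / p := by positivity
  unfold hz
  refine ENNReal.rpow_ne_top_of_nonneg hp'.le ?_
  rw [tsum_eq_sum (s := Finset.Icc (-(m : ℤ)) m)]
  · refine ENNReal.sum_ne_top.2 fun k _ => ENNReal.rpow_ne_top_of_nonneg hp.le
      (ENNReal.mul_ne_top ENNReal.ofReal_ne_top (ENNReal.rpow_ne_top_of_nonneg hq'.le ?_))
    refine ne_top_of_le_ne_top (b := ∫⁻ x in herzRing k, 1) ?_ (lintegral_mono fun x => ?_)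
    · simp only [lintegral_const, one_mul, Measure.restrict_apply_univ]
      exact ne_top_of_le_ne_top (by simp : volume (Set.Ioo (-(2 : ℝ) ^ k) ((2 : ℝ) ^ k)) ≠ ∞)
        (measure_mono Set.sdiff_subset)
    · by_cases hx : x ∈ herzI m <;> simp [hx, hq]
  · intro k hk
    have : ∫⁻ x in herzRing k, ((herzI m).indicator (fun _ => (1 : ℝ≥0∞)) x) ^ q = 0 := by
      rw [setLIntegral_congr_fun (g := fun _ => 0) (measurableSet_herzRing k)]
      · simp
      · intro x hx
        have : x ∉ herzI m := fun h => hk (ring_inter h hx)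
        simp [this, hq]
    rw [this, ENNReal.zero_rpow_of_pos hq', mul_zero, ENNReal.zero_rpow_of_pos hp]

lemma snoc_mem_herzA {n m : ℕ} (y : Fin n → ℝ) (x : ℝ) :
    (Fin.snoc y x : Fin (n+1) → ℝ) ∈ herzA (n+1) m ↔ y ∈ herzA n m ∧ x ∈ herzI m := by
  simp [herzA, Fin.forall_fin_succ']

lemma MN_indicator {n : ℕ} {α p q : Fin n → ℝ} (hp : ∀ i, 0 < p i) (hq : ∀ i, 0 < q i) (m : ℕ) :
    MN n α p q ((herzA n m).indicator fun _ => 1) ≠ ∞ := by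
  induction n with
  | zero => simp [MN, herzA]
  | succ n ih =>
    have ih' := ih (α := Fin.init α) (p := Fin.init p) (q := Fin.init q)
      (fun i => hp _) (fun i => hq _)
    have : ∀ x : ℝ, (MN n (Fin.init α) (Fin.init p) (Fin.init q) fun y =>
        (herzA (n+1) m).indicator (fun _ => (1 : ℝ≥0∞)) (Fin.snoc y x)) =
        MN n (Fin.init α) (Fin.init p) (Fin.init q) ((herzA n m).indicator fun _ => 1) *
          (herzI m).indicator (fun _ => 1) x := by
      intro x
      by_cases hx : x ∈ herzI m
      · simp only [hx, Set.indicator_of_mem, mul_one]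
        congr 1
        funext y
        by_cases hy : y ∈ herzA n m <;> simp [Set.indicator, snoc_mem_herzA, hx, hy]
      · simp only [hx, not_false_eq_true, Set.indicator_of_notMem, mul_zero]
        rw [← MN_zero (n := n) (α := Fin.init α) (p := Fin.init p) (q := Fin.init q)
          (fun i => hp _) (fun i => hq _)]
        congr 1
        funext y
        simp [Set.indicator, snoc_mem_herzA, hx]
    simp only [MN, this]
    rw [hz_const_mul (hp _) (hq _) ih']
    exact ENNReal.mul_ne_top ih' (hz_indicator (hp _) (hq _) m)

/-! ### Grid functions -/

def IsGrid (n : ℕ) (g : (Fin n → ℝ) → ℂ) : Prop :=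
  ∃ (m : ℕ) (T : Type) (_ : Finite T) (φ : ℝ → T) (Φ : (Fin n → T) → ℂ),
    (∀ t, MeasurableSet (φ ⁻¹' {t})) ∧ (∀ x, g x = Φ fun i => φ (x i)) ∧
    ∀ x, x ∉ herzA n m → g x = 0

lemma measurableSet_herzA (n m : ℕ) : MeasurableSet (herzA n m) :=
  MeasurableSet.univ_pi fun _ => measurableSet_herzI m

lemma IsGrid.isHSimple {n : ℕ} {g : (Fin n → ℝ) → ℂ} (h : IsGrid n g) : IsHSimple n g := by
  classical
  obtain ⟨m, T, hT, φ, Φ, hφ, hg, h0⟩ := h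
  have := Fintype.ofFinite T
  let e := Fintype.equivFin (Fin n → T)
  have hmem : ∀ (τ : Fin n → T) (x : Fin n → ℝ),
      x ∈ Set.univ.pi (fun i => φ ⁻¹' {τ i} ∩ herzI m) ↔ (fun i => φ (x i)) = τ ∧ x ∈ herzA n m := by
    intro τ x
    simp [herzA, funext_iff, forall_and]
  refine ⟨m, Fintype.card (Fin n → T), fun k => Φ (e.symm k),
    fun k i => φ ⁻¹' {e.symm k i} ∩ herzI m, fun k i => (hφ _).inter (measurableSet_herzI m),
    fun k x hx => ((hmem _ _).1 hx).2, fun k l hkl => ?_, ?_⟩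
  · refine Set.disjoint_left.2 ?_
    intro x hx hx'
    exact hkl (e.symm.injective (((hmem _ _).1 hx).1.symm.trans ((hmem _ _).1 hx').1))
  · funext x
    simp only [Set.indicator, hmem]
    by_cases hx : x ∈ herzA n m
    · rw [Finset.sum_eq_single (e fun i => φ (x i))]
      · simp [hx, hg]
      · intro k _ hk
        rw [if_neg]
        rintro ⟨h, _⟩
        exact hk (by rw [h]; simp)
      · simp
    · simp [hx, h0]

lemma herzA_mono {n m m' : ℕ} (h : m ≤ m') : herzA n m ⊆ herzA n m' := by
  intro x hx i hi
  have hh := hx i hi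
  have h1 := herzI_abs hh
  have h2 := herzI_lt hh
  refine herzI_of_abs (le_trans ?_ h1.1) (lt_of_lt_of_le h2 ?_)
  · exact zpow_le_zpow_right₀ one_le_two (by omega)
  · exact zpow_le_zpow_right₀ one_le_two (by omega)

lemma IsGrid.add {n : ℕ} {g h : (Fin n → ℝ) → ℂ} (hg : IsGrid n g) (hh : IsGrid n h) :
    IsGrid n (fun x => g x + h x) := by
  obtain ⟨m, T, hT, φ, Φ, hφ, hg, h0⟩ := hg
  obtain ⟨m', T', hT', φ', Φ', hφ', hg', h0'⟩ := hh
  refine ⟨max m m', T × T', inferInstance, fun x => (φ x, φ' x),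
    fun τ => Φ (fun i => (τ i).1) + Φ' (fun i => (τ i).2), fun t => ?_, fun x => ?_, fun x hx => ?_⟩
  · have : (fun x => (φ x, φ' x)) ⁻¹' {t} = φ ⁻¹' {t.1} ∩ φ' ⁻¹' {t.2} := by
      ext x; simp [Prod.ext_iff]
    rw [this]
    exact (hφ _).inter (hφ' _)
  · show g x + h x = _
    rw [hg, hg']
  · show g x + h x = 0
    rw [h0 x fun h => hx (herzA_mono (le_max_left _ _) h),
      h0' x fun h => hx (herzA_mono (le_max_right _ _) h), add_zero]

lemma IsGrid.const_mul {n : ℕ} {g : (Fin n → ℝ) → ℂ} (hg : IsGrid n g) (c : ℂ) :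
    IsGrid n (fun x => c * g x) := by
  obtain ⟨m, T, hT, φ, Φ, hφ, hg, h0⟩ := hg
  exact ⟨m, T, hT, φ, fun τ => c * Φ τ, hφ, fun x => by simp only [hg],
    fun x hx => by simp only [h0 x hx, mul_zero]⟩

lemma isGrid_rect {n : ℕ} (m : ℕ) (s : Fin n → Set ℝ) (hs : ∀ i, MeasurableSet (s i)) :
    IsGrid n ((Set.univ.pi s ∩ herzA n m).indicator fun _ => 1) := by
  classical
  refine ⟨m, (Fin n → Prop) × Prop, inferInstance, fun x => (fun i => x ∈ s i, x ∈ herzI m),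
    fun τ => if ∀ i, (τ i).1 i ∧ (τ i).2 then 1 else 0, fun t => ?_, fun x => ?_, fun x hx => ?_⟩
  · have : (fun x => ((fun i => x ∈ s i, x ∈ herzI m) : (Fin n → Prop) × Prop)) ⁻¹' {t} =
        (⋂ i, {x | x ∈ s i ↔ t.1 i}) ∩ {x | x ∈ herzI m ↔ t.2} := by
      ext x; simp [Prod.ext_iff, funext_iff]
    rw [this]
    have aux : ∀ (A : Set ℝ) (P : Prop), MeasurableSet A → MeasurableSet {x | x ∈ A ↔ P} := by
      intro A P hA
      by_cases hP : P
      · simpa [hP] using hA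
      · simp only [hP, iff_false]; exact hA.compl
    exact (MeasurableSet.iInter fun i => aux _ _ (hs i)).inter (aux _ _ (measurableSet_herzI m))
  · simp [Set.indicator, herzA, forall_and]
  · simp [hx]

lemma IsGrid.measurable {n : ℕ} {g : (Fin n → ℝ) → ℂ} (hg : IsGrid n g) : Measurable g := by
  obtain ⟨m, T, hT, φ, Φ, hφ, hg, h0⟩ := hg
  let _ : MeasurableSpace T := ⊤
  have h1 : Measurable φ := measurable_to_countable' hφ
  have : g = Φ ∘ fun x i => φ (x i) := funext hg
  rw [this]
  refine (measurable_of_finite Φ).comp (measurable_pi_iff.2 fun i => h1.comp (measurable_pi_apply i))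

/-! ### Approximable functions -/

def Appr (n : ℕ) (α p q : Fin n → ℝ) (f : (Fin n → ℝ) → ℂ) : Prop :=
  Measurable f ∧ ∀ ε : ℝ≥0∞, 0 < ε → ∃ g, IsGrid n g ∧ MN n α p q (fun x => ‖f x - g x‖ₑ) < ε

section
variable {n : ℕ} {α p q : Fin n → ℝ}

lemma IsGrid.appr (hp : ∀ i, 0 < p i) (hq : ∀ i, 0 < q i) {g : (Fin n → ℝ) → ℂ}
    (hg : IsGrid n g) : Appr n α p q g := by
  refine ⟨hg.measurable, fun ε hε => ⟨g, hg, ?_⟩⟩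
  simpa [MN_zero hp hq] using hε

lemma Appr.of_close (hp : ∀ i, 0 < p i) (hq : ∀ i, 0 < q i) {f : (Fin n → ℝ) → ℂ}
    (hf : Measurable f)
    (h : ∀ ε : ℝ≥0∞, 0 < ε → ∃ g, Appr n α p q g ∧ MN n α p q (fun x => ‖f x - g x‖ₑ) < ε) :
    Appr n α p q f := by
  refine ⟨hf, fun ε hε => ?_⟩
  obtain ⟨C, hC, hadd⟩ := MN_add (α := α) hp hq
  obtain ⟨δ, hδ, hδ'⟩ : ∃ δ : ℝ≥0∞, 0 < δ ∧ C * (δ + δ) < ε := by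
    have ht : Tendsto (fun δ : ℝ≥0∞ => C * (δ + δ)) (nhds 0) (nhds (C * (0 + 0))) :=
      ENNReal.Tendsto.const_mul (tendsto_id.add tendsto_id) (Or.inr hC)
    rw [add_zero, mul_zero] at ht
    have h1 := (ht.eventually (gt_mem_nhds hε)).filter_mono
      (nhdsWithin_le_nhds (s := Set.Ioi (0 : ℝ≥0∞)))
    obtain ⟨δ, h2, h3⟩ := (h1.and self_mem_nhdsWithin).exists
    exact ⟨δ, h3, h2⟩
  obtain ⟨g, hg, hfg⟩ := h δ hδ
  obtain ⟨u, hu, hgu⟩ := hg.2 δ hδ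
  refine ⟨u, hu, lt_of_le_of_lt ?_ hδ'⟩
  refine (MN_mono hp hq (G := fun x => ‖f x - g x‖ₑ + ‖g x - u x‖ₑ) fun x => ?_).trans
    ((hadd _ _ (hf.sub hg.1).enorm (hg.1.sub hu.measurable).enorm).trans ?_)
  · rw [← sub_add_sub_cancel (f x) (g x) (u x)]
    exact enorm_add_le _ _
  · exact mul_le_mul_right (add_le_add hfg.le hgu.le) C

lemma Appr.const_mul (hp : ∀ i, 0 < p i) (hq : ∀ i, 0 < q i) {f : (Fin n → ℝ) → ℂ}
    (hf : Appr n α p q f) (c : ℂ) : Appr n α p q (fun x => c * f x) := by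
  refine ⟨hf.1.const_mul c, fun ε hε => ?_⟩
  obtain ⟨δ, hδ, hδ'⟩ : ∃ δ : ℝ≥0∞, 0 < δ ∧ ‖c‖ₑ * δ < ε := by
    have ht : Tendsto (fun δ : ℝ≥0∞ => ‖c‖ₑ * δ) (nhds 0) (nhds (‖c‖ₑ * 0)) :=
      ENNReal.Tendsto.const_mul tendsto_id (Or.inr enorm_ne_top)
    rw [mul_zero] at ht
    have h1 := (ht.eventually (gt_mem_nhds hε)).filter_mono
      (nhdsWithin_le_nhds (s := Set.Ioi (0 : ℝ≥0∞)))
    obtain ⟨δ, h2, h3⟩ := (h1.and self_mem_nhdsWithin).exists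
    exact ⟨δ, h3, h2⟩
  obtain ⟨g, hg, hfg⟩ := hf.2 δ hδ
  refine ⟨_, hg.const_mul c, ?_⟩
  simp_rw [← mul_sub, enorm_mul]
  rw [MN_const_mul hp hq enorm_ne_top]
  exact lt_of_le_of_lt (by gcongr) hδ'

lemma Appr.add_grid {f g : (Fin n → ℝ) → ℂ}
    (hf : Appr n α p q f) (hg : IsGrid n g) : Appr n α p q (fun x => f x + g x) := by
  refine ⟨hf.1.add hg.measurable, fun ε hε => ?_⟩
  obtain ⟨u, hu, h⟩ := hf.2 ε hε
  refine ⟨_, hu.add hg, ?_⟩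
  simpa using h

lemma Appr.add (hp : ∀ i, 0 < p i) (hq : ∀ i, 0 < q i) {f g : (Fin n → ℝ) → ℂ}
    (hf : Appr n α p q f) (hg : Appr n α p q g) : Appr n α p q (fun x => f x + g x) := by
  refine Appr.of_close hp hq (hf.1.add hg.1) fun ε hε => ?_
  obtain ⟨u, hu, h⟩ := hg.2 ε hε
  refine ⟨_, hf.add_grid hu, ?_⟩
  simpa using h

lemma Appr.of_dominated (hp : ∀ i, 0 < p i) (hq : ∀ i, 0 < q i) {f : (Fin n → ℝ) → ℂ}
    (hf : Measurable f) {u : ℕ → (Fin n → ℝ) → ℂ} (hu : ∀ j, Appr n α p q (u j))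
    {G : (Fin n → ℝ) → ℝ≥0∞} (hG : Measurable G) (hfin : MN n α p q G ≠ ∞)
    (hle : ∀ j x, ‖f x - u j x‖ₑ ≤ G x)
    (hlim : ∀ x, (∀ i, x i ≠ 0) → Tendsto (fun j => u j x) atTop (nhds (f x))) :
    Appr n α p q f := by
  refine Appr.of_close hp hq hf fun ε hε => ?_
  have ht : Tendsto (fun j => MN n α p q (fun x => ‖f x - u j x‖ₑ)) atTop (nhds 0) := by
    refine MN_dct hp hq (fun j => (hf.sub (hu j).1).enorm) hG hle hfin fun x hx => ?_
    have := ((tendsto_const_nhds (x := f x)).sub (hlim x hx)).enorm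
    simpa using this
  obtain ⟨j, hj⟩ := (ht.eventually (gt_mem_nhds hε)).exists
  exact ⟨u j, hu j, hj⟩

lemma appr_set (hp : ∀ i, 0 < p i) (hq : ∀ i, 0 < q i) (m : ℕ) {B : Set (Fin n → ℝ)}
    (hB : MeasurableSet B) : Appr n α p q ((B ∩ herzA n m).indicator fun _ => 1) := by
  have hA := measurableSet_herzA n m
  have huniv : Appr n α p q ((Set.univ ∩ herzA n m).indicator fun _ => 1) := by
    have := (isGrid_rect (n := n) m (fun _ => Set.univ) fun _ => MeasurableSet.univ).appr
      (α := α) hp hq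
    simpa using this
  have hzero : Appr n α p q (fun _ => 0) := by
    simpa using huniv.const_mul hp hq 0
  induction B, hB using MeasurableSpace.induction_on_inter
    (generateFrom_pi (ι := Fin n) (α := fun _ => ℝ)).symm isPiSystem_pi with
  | empty => simpa using hzero
  | basic t ht =>
    obtain ⟨s, hs, rfl⟩ := ht
    exact (isGrid_rect m s fun i => hs i trivial).appr hp hq
  | compl t ht ih =>
    have := huniv.add hp hq (ih.const_mul hp hq (-1))
    convert this using 1
    funext x
    by_cases h1 : x ∈ t <;> by_cases h2 : x ∈ herzA n m <;> simp [h1, h2]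
  | iUnion t hd ht ih =>
    have hpart : ∀ j : ℕ, Appr n α p q
        (fun x => ∑ i ∈ Finset.range j, (t i ∩ herzA n m).indicator (fun _ => (1 : ℂ)) x) := by
      intro j
      induction j with
      | zero => simpa using hzero
      | succ j ihj =>
        simp_rw [Finset.sum_range_succ]
        exact ihj.add hp hq (ih j)
    have hval : ∀ (j : ℕ) (x : Fin n → ℝ), ∑ i ∈ Finset.range j,
        (t i ∩ herzA n m).indicator (fun _ => (1 : ℂ)) x =
        ((⋃ i ∈ Finset.range j, t i) ∩ herzA n m).indicator (fun _ => (1 : ℂ)) x := by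
      intro j x
      rw [Set.iUnion₂_inter, Finset.indicator_biUnion_apply]
      intro a _ b _ hab
      exact (hd hab).mono Set.inter_subset_left Set.inter_subset_left
    have hind : ∀ (x : Fin n → ℝ) (U V : Set (Fin n → ℝ)), (x ∈ U ↔ x ∈ V) →
        (U ∩ herzA n m).indicator (fun _ => (1 : ℂ)) x =
          (V ∩ herzA n m).indicator (fun _ => (1 : ℂ)) x := by
      intro x U V h
      by_cases hU : x ∈ U ∩ herzA n m
      · rw [Set.indicator_of_mem hU, Set.indicator_of_mem (s := V ∩ herzA n m) ⟨h.1 hU.1, hU.2⟩]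
      · rw [Set.indicator_of_notMem hU, Set.indicator_of_notMem (s := V ∩ herzA n m) fun hV => hU ⟨h.2 hV.1, hV.2⟩]
    refine Appr.of_dominated hp hq (measurable_const.indicator ((MeasurableSet.iUnion ht).inter hA))
      hpart (G := (herzA n m).indicator fun _ => 1) (measurable_const.indicator hA)
      (MN_indicator hp hq m) (fun j x => ?_) (fun x _ => ?_)
    · rw [hval]
      by_cases h2 : x ∈ herzA n m
      · by_cases h3 : x ∈ ⋃ i, t i
        · by_cases h4 : x ∈ ⋃ i ∈ Finset.range j, t i
          · simp only [Set.indicator, Set.mem_inter_iff, h2, h3, h4]; simp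
          · simp only [Set.indicator, Set.mem_inter_iff, h2, h3, h4]; simp
        · have h4 : x ∉ ⋃ i ∈ Finset.range j, t i := by
            intro h; apply h3
            simp only [Set.mem_iUnion] at h ⊢
            obtain ⟨i, _, hi⟩ := h
            exact ⟨i, hi⟩
          simp only [Set.indicator, Set.mem_inter_iff, h2, h3, h4]; simp
      · simp [h2]
    · simp_rw [hval]
      refine tendsto_const_nhds.congr' ?_
      by_cases h3 : x ∈ ⋃ i, t i
      · obtain ⟨i, hi⟩ := Set.mem_iUnion.1 h3
        filter_upwards [eventually_gt_atTop i] with j hj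
        have h4 : x ∈ ⋃ i ∈ Finset.range j, t i := by
          simp only [Set.mem_iUnion]
          exact ⟨i, Finset.mem_range.2 hj, hi⟩
        exact hind x _ _ (iff_of_true h3 h4)
      · refine Eventually.of_forall fun j => ?_
        have h4 : x ∉ ⋃ i ∈ Finset.range j, t i := by
          intro h; apply h3
          simp only [Set.mem_iUnion] at h ⊢
          obtain ⟨i, _, hi⟩ := h
          exact ⟨i, hi⟩
        exact hind x _ _ (iff_of_false h3 h4)

lemma appr_simple (hp : ∀ i, 0 < p i) (hq : ∀ i, 0 < q i) (m : ℕ) (s : SimpleFunc (Fin n → ℝ) ℂ) :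
    Appr n α p q ((herzA n m).indicator s) := by
  induction s using SimpleFunc.induction with
  | const c hs =>
    rename_i S
    have := (appr_set (α := α) hp hq m hs).const_mul hp hq c
    convert this using 1
    funext x
    by_cases h1 : x ∈ S <;> by_cases h2 : x ∈ herzA n m <;> simp [h1, h2, Set.indicator]
  | add _ h1 h2 =>
    convert h1.add hp hq h2 using 1
    funext x
    simp [Set.indicator_add']

lemma eventually_mem_herzA {x : Fin n → ℝ} (hx : ∀ i, x i ≠ 0) :
    ∀ᶠ m : ℕ in atTop, x ∈ herzA n m := by
  have : ∀ i, ∀ᶠ m : ℕ in atTop, x i ∈ herzI m := by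
    intro i
    have h1 : Tendsto (fun m : ℕ => (2 : ℝ) ^ m) atTop atTop :=
      tendsto_pow_atTop_atTop_of_one_lt one_lt_two
    have h0 : 0 < |x i| := abs_pos.2 (hx i)
    filter_upwards [h1.eventually_gt_atTop |x i|, h1.eventually_ge_atTop |x i|⁻¹] with m hm hm'
    refine herzI_of_abs ?_ (by simpa using hm)
    rw [zpow_neg, zpow_natCast]
    exact inv_le_of_inv_le₀ h0 hm'
  filter_upwards [eventually_all.2 this] with m hm i _ using hm i

lemma appr_all (hp : ∀ i, 0 < p i) (hq : ∀ i, 0 < q i) {f : (Fin n → ℝ) → ℂ}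
    (hf : Measurable f) (hfin : MN n α p q (fun x => ‖f x‖ₑ) ≠ ∞) : Appr n α p q f := by
  let s : ℕ → SimpleFunc (Fin n → ℝ) ℂ := fun j =>
    SimpleFunc.approxOn f hf Set.univ 0 trivial j
  refine Appr.of_dominated hp hq hf (u := fun j => (herzA n j).indicator (s j))
    (fun j => appr_simple hp hq j (s j)) (G := fun x => 3 * ‖f x‖ₑ) (hf.enorm.const_mul 3)
    ?_ (fun j x => ?_) (fun x hx => ?_)
  · rw [MN_const_mul hp hq (by simp)]
    exact ENNReal.mul_ne_top (by simp) hfin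
  · have h1 : ‖s j x‖ ≤ ‖f x‖ + ‖f x‖ := SimpleFunc.norm_approxOn_zero_le hf (Set.mem_univ _) x j
    have h2 : ‖f x - (herzA n j).indicator (s j) x‖ ≤ 3 * ‖f x‖ := by
      refine (norm_sub_le _ _).trans ?_
      have := norm_indicator_le_norm_self (s := herzA n j) (s j) x
      linarith
    rw [← ofReal_norm, ← ofReal_norm, show (3 : ℝ≥0∞) = ENNReal.ofReal 3 by simp,
      ← ENNReal.ofReal_mul (by norm_num)]
    exact ENNReal.ofReal_le_ofReal h2
  · have h1 : Tendsto (fun j => s j x) atTop (nhds (f x)) :=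
      SimpleFunc.tendsto_approxOn hf (Set.mem_univ _) (by simp)
    refine h1.congr' ?_
    filter_upwards [eventually_mem_herzA hx] with j hj
    simp [hj]

end

/-- density of `H(ℝⁿ)` in the mixed-norm Herz space. -/
theorem mixedHerz_HSimple_dense (n : ℕ) (p q α : Fin n → ℝ)
    (hp : ∀ i, 0 < p i) (hq : ∀ i, 0 < q i)
    (f : (Fin n → ℝ) → ℂ) (hf : Measurable f)
    (hfin : herzNormC n α (fun i => ENNReal.ofReal (p i))
      (fun i => ENNReal.ofReal (q i)) f ≠ ∞)
    (ε : ℝ≥0∞) (hε : 0 < ε) :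
    ∃ g : (Fin n → ℝ) → ℂ, IsHSimple n g ∧
      herzNormC n α (fun i => ENNReal.ofReal (p i)) (fun i => ENNReal.ofReal (q i))
        (f - g) < ε := by
  have e : ∀ h : (Fin n → ℝ) → ℂ, herzNormC n α (fun i => ENNReal.ofReal (p i))
      (fun i => ENNReal.ofReal (q i)) h = MN n α p q (fun x => ‖h x‖ₑ) := fun h =>
    mixed_eq_MN n α p q hp hq _
  rw [e] at hfin
  obtain ⟨g, hg, hlt⟩ := (appr_all hp hq hf hfin).2 ε hε
  exact ⟨g, hg.isHSimple, by rw [e]; exact hlt⟩
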